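/- Let G be a group and K a field of characteristic 0 with algebraic closure K̄. Let ρ : G → GL_n(K̄) be a semisimple representation with irreducible decomposition ρ ≅ ρ₁ ⊕ ⋯ ⊕ ρ_r. Assume: (i) Tr ρ(g) ∈ K for every g ∈ G; (ii) there exists g₀ ∈ G such that the characteristic polynomial of ρ(g₀) has n distinct roots, all lying in K. Then for every field automorphism σ ∈ Gal(K̄/K) and each i (1 ≤ i ≤ r), the representation σ∘ρ_i obtained by applying σ to all matrix entries of ρ_i is equivalent to ρ_i. -/

import Mathlib

open Matrix Polynomial

/-- A matrix representation `ρ : G → GLₙ(F)` is *defined over* a subfield `E ⊆ F` if some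
single conjugate of it has all matrix entries in `E`. -/
def MatRep.IsDefinedOver {G : Type*} [Group G] {F : Type*} [Field F] {ι : Type*}
    [Fintype ι] [DecidableEq ι]
    (ρ : G →* Matrix.GeneralLinearGroup ι F) (E : Subfield F) : Prop :=
  ∃ M : Matrix.GeneralLinearGroup ι F,
    ∀ (g : G) (i j : ι),
      ((M * ρ g * M⁻¹ : Matrix.GeneralLinearGroup ι F) : Matrix ι ι F) i j ∈ E

/-- A matrix representation is *irreducible* if the underlying space is nonzero and the only
`G`-invariant subspaces (for the `mulVec` action) are `⊥` and `⊤`. -/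
def MatRep.IsIrreducible {G : Type*} [Group G] {F : Type*} [Field F] {ι : Type*}
    [Fintype ι] [DecidableEq ι]
    (ρ : G →* Matrix.GeneralLinearGroup ι F) : Prop :=
  Nonempty ι ∧
    ∀ p : Submodule F (ι → F),
      (∀ g : G, ∀ v ∈ p, ((ρ g : Matrix ι ι F)).mulVec v ∈ p) → p = ⊥ ∨ p = ⊤

namespace CompConj

lemma charpoly_blockDiag {R : Type*} [CommRing R] {r : ℕ} (m : Fin r → ℕ)
    (hm : ∀ i, Nonempty (Fin (m i)))
    (d : (i : Fin r) → Matrix (Fin (m i)) (Fin (m i)) R) :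
    (Matrix.blockDiagonal' d).charpoly = ∏ i, (d i).charpoly := by
  rw [(Matrix.blockTriangular_blockDiagonal' d).charpoly]
  have himg : Finset.image (Sigma.fst : (Σ i : Fin r, Fin (m i)) → Fin r) Finset.univ
      = Finset.univ := by
    ext i
    obtain ⟨x⟩ := hm i
    simp only [Finset.mem_image, Finset.mem_univ, true_and, iff_true]
    exact ⟨⟨i, x⟩, rfl⟩
  rw [himg]
  refine Finset.prod_congr rfl fun i _ => ?_
  rw [← Matrix.charpoly_reindex (Equiv.sigmaSubtype i)]
  congr 1
  ext x y
  simp [Matrix.toSquareBlock_def, Equiv.sigmaSubtype, Matrix.blockDiagonal'_apply]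

section
variable {G : Type*} [Group G] {F : Type*} [Field F] {ι : Type*} [Fintype ι] [DecidableEq ι]

/-- the orbit map on formal combinations of group elements -/
noncomputable def orb (ρ : G →* Matrix.GeneralLinearGroup ι F) (v : ι → F) :
    (G →₀ F) →ₗ[F] (ι → F) :=
  Finsupp.linearCombination F (fun g => (ρ g : Matrix ι ι F).mulVec v)

lemma orb_single (ρ : G →* Matrix.GeneralLinearGroup ι F) (v : ι → F) (g : G) (c : F) :
    orb ρ v (Finsupp.single g c) = c • (ρ g : Matrix ι ι F).mulVec v := by
  simp [orb]

lemma orb_mul (ρ : G →* Matrix.GeneralLinearGroup ι F) (v : ι → F) (g : G) (x : G →₀ F) :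
    (ρ g : Matrix ι ι F).mulVec (orb ρ v x) =
      orb ρ v (Finsupp.lmapDomain F F (fun h => g * h) x) := by
  induction x using Finsupp.induction_linear with
  | zero => simp
  | add x y hx hy => rw [map_add, Matrix.mulVec_add, hx, hy, map_add, map_add]
  | single h c =>
    rw [Finsupp.lmapDomain_apply, Finsupp.mapDomain_single, orb_single, orb_single,
      Matrix.mulVec_smul, map_mul, Units.val_mul, Matrix.mulVec_mulVec]

lemma orb_surj (ρ : G →* Matrix.GeneralLinearGroup ι F) (hρ : MatRep.IsIrreducible ρ)
    (v : ι → F) (hv : v ≠ 0) : Function.Surjective (orb ρ v) := by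
  rw [← LinearMap.range_eq_top]
  refine (hρ.2 (LinearMap.range (orb ρ v)) ?_).resolve_left ?_
  · rintro g _ ⟨x, rfl⟩
    exact ⟨_, (orb_mul ρ v g x).symm⟩
  · intro h
    apply hv
    have : v ∈ LinearMap.range (orb ρ v) := ⟨Finsupp.single 1 1, by rw [orb_single]; simp⟩
    rw [h] at this
    simpa using this

lemma eq_zero_of_dot (ρ : G →* Matrix.GeneralLinearGroup ι F) (hρ : MatRep.IsIrreducible ρ)
    (w : ι → F) (hw : w ≠ 0) (x : ι → F)
    (hx : ∀ g, w ⬝ᵥ (ρ g : Matrix ι ι F).mulVec x = 0) : x = 0 := by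
  let p : Submodule F (ι → F) :=
    { carrier := {x | ∀ g, w ⬝ᵥ (ρ g : Matrix ι ι F).mulVec x = 0}
      add_mem' := by
        intro a b ha hb g
        rw [Matrix.mulVec_add, dotProduct_add, ha g, hb g, add_zero]
      zero_mem' := by intro g; simp
      smul_mem' := by
        intro c a ha g
        rw [Matrix.mulVec_smul, dotProduct_smul, ha g, smul_zero] }
  have hp : p = ⊥ := by
    refine (hρ.2 p ?_).resolve_right ?_
    · intro g y hy h
      have := hy (h * g)
      rwa [map_mul, Units.val_mul, ← Matrix.mulVec_mulVec] at this
    · intro htop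
      apply hw
      ext i
      have h1 : Pi.single i (1 : F) ∈ p := by rw [htop]; trivial
      have := h1 1
      rw [map_one, Units.val_one, Matrix.one_mulVec, dotProduct_single, mul_one] at this
      exact this
  have hxp : x ∈ p := hx
  rw [hp] at hxp
  simpa using hxp

lemma ker_le {κ : Type*} [Fintype κ] [DecidableEq κ]
    (ρ : G →* Matrix.GeneralLinearGroup ι F)
    (ρ' : G →* Matrix.GeneralLinearGroup κ F) (hρ' : MatRep.IsIrreducible ρ')
    (v w : ι → F) (v' w' : κ → F) (hw' : w' ≠ 0)
    (h : ∀ g, w ⬝ᵥ (ρ g : Matrix ι ι F).mulVec v = w' ⬝ᵥ (ρ' g : Matrix κ κ F).mulVec v') :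
    LinearMap.ker (orb ρ v) ≤ LinearMap.ker (orb ρ' v') := by
  have key : ∀ x, w ⬝ᵥ orb ρ v x = w' ⬝ᵥ orb ρ' v' x := by
    intro x
    induction x using Finsupp.induction_linear with
    | zero => simp
    | add x y hx hy => rw [map_add, map_add, dotProduct_add, dotProduct_add, hx, hy]
    | single g c => rw [orb_single, orb_single, dotProduct_smul, dotProduct_smul, h]
  intro x hx
  rw [LinearMap.mem_ker] at hx ⊢
  refine eq_zero_of_dot ρ' hρ' w' hw' _ fun g => ?_
  rw [orb_mul, ← key, ← orb_mul, hx]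
  simp

lemma equiv_of_coeff (ρ ρ' : G →* Matrix.GeneralLinearGroup ι F)
    (hρ : MatRep.IsIrreducible ρ) (hρ' : MatRep.IsIrreducible ρ')
    (v w v' w' : ι → F) (hv : v ≠ 0) (hw : w ≠ 0) (hv' : v' ≠ 0) (hw' : w' ≠ 0)
    (h : ∀ g, w ⬝ᵥ (ρ g : Matrix ι ι F).mulVec v = w' ⬝ᵥ (ρ' g : Matrix ι ι F).mulVec v') :
    ∃ N : Matrix.GeneralLinearGroup ι F, ∀ g,
      (ρ' g : Matrix ι ι F) = (N : Matrix ι ι F) * (ρ g : Matrix ι ι F) *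
        ((N⁻¹ : Matrix.GeneralLinearGroup ι F) : Matrix ι ι F) := by
  have hker : LinearMap.ker (orb ρ v) = LinearMap.ker (orb ρ' v') :=
    le_antisymm (ker_le ρ ρ' hρ' v w v' w' hw' h)
      (ker_le ρ' ρ hρ v' w' v w hw fun g => (h g).symm)
  have hs := orb_surj ρ hρ v hv
  have hs' := orb_surj ρ' hρ' v' hv'
  let f : (ι → F) ≃ₗ[F] (ι → F) :=
    ((orb ρ v).quotKerEquivOfSurjective hs).symm ≪≫ₗ
      Submodule.quotEquivOfEq _ _ hker ≪≫ₗ (orb ρ' v').quotKerEquivOfSurjective hs'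
  have hf : ∀ x, f (orb ρ v x) = orb ρ' v' x := by
    intro x
    simp only [f, LinearEquiv.trans_apply, LinearMap.quotKerEquivOfSurjective_symm_apply]
    rw [Submodule.quotEquivOfEq_mk, LinearMap.quotKerEquivOfSurjective_apply_mk]
  let N : Matrix.GeneralLinearGroup ι F :=
    ⟨LinearMap.toMatrix' f.toLinearMap, LinearMap.toMatrix' f.symm.toLinearMap,
      by rw [← LinearMap.toMatrix'_comp]; simp, by rw [← LinearMap.toMatrix'_comp]; simp⟩
  have hN : ∀ x, (N : Matrix ι ι F).mulVec x = f x := by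
    intro x
    exact LinearMap.toMatrix'_mulVec _ _
  refine ⟨N, fun g => ?_⟩
  have hc : (ρ' g : Matrix ι ι F) * (N : Matrix ι ι F) = (N : Matrix ι ι F) * ρ g := by
    apply Matrix.toLin'.injective
    refine LinearMap.ext fun y => ?_
    obtain ⟨x, rfl⟩ := hs y
    rw [Matrix.toLin'_apply, Matrix.toLin'_apply, ← Matrix.mulVec_mulVec,
      ← Matrix.mulVec_mulVec, hN, hf, orb_mul, orb_mul, hN, hf]
  rw [← hc, mul_assoc, ← Units.val_mul, mul_inv_cancel]
  simp

lemma irr_map (σ : F ≃+* F) (ρ : G →* Matrix.GeneralLinearGroup ι F)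
    (hρ : MatRep.IsIrreducible ρ) :
    MatRep.IsIrreducible ((Matrix.GeneralLinearGroup.map (σ : F →+* F)).comp ρ) := by
  refine ⟨hρ.1, fun p hp => ?_⟩
  have hmap : ∀ (g : G) (x : ι → F), σ ∘ ((ρ g : Matrix ι ι F).mulVec x) =
      (((Matrix.GeneralLinearGroup.map (σ : F →+* F)).comp ρ g :
        Matrix.GeneralLinearGroup ι F) : Matrix ι ι F).mulVec (σ ∘ x) := by
    intro g x
    ext i
    simp [Matrix.mulVec, dotProduct]
  let q : Submodule F (ι → F) :=
    { carrier := {x | σ ∘ x ∈ p}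
      add_mem' := by
        intro a b ha hb
        have : σ ∘ (a + b) = σ ∘ a + σ ∘ b := by ext; simp
        simp only [Set.mem_setOf_eq] at *
        rw [this]; exact p.add_mem ha hb
      zero_mem' := by
        have : σ ∘ (0 : ι → F) = 0 := by ext; simp
        simp only [Set.mem_setOf_eq, this, p.zero_mem]
      smul_mem' := by
        intro c a ha
        have : σ ∘ (c • a) = σ c • (σ ∘ a) := by ext; simp
        simp only [Set.mem_setOf_eq] at *
        rw [this]; exact p.smul_mem _ ha }
  have hback : ∀ y : ι → F, σ ∘ (σ.symm ∘ y) = y := by intro y; ext; simp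
  rcases hρ.2 q (fun g x hx => by
    change σ ∘ _ ∈ p
    rw [hmap]; exact hp g _ hx) with h | h
  · left
    rw [eq_bot_iff]
    intro y hy
    have : σ.symm ∘ y ∈ q := by change σ ∘ _ ∈ p; rwa [hback]
    rw [h, Submodule.mem_bot] at this
    rw [Submodule.mem_bot, ← hback y, this]
    ext; simp
  · right
    rw [eq_top_iff]
    intro y _
    have : σ.symm ∘ y ∈ q := by rw [h]; trivial
    change σ ∘ _ ∈ p at this
    rwa [hback] at this

lemma rank_one (A E : Matrix ι ι F) (l : F) (hl : A.charpoly.rootMultiplicity l ≤ 1)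
    (hAE : A * E = l • E) (hE : E ≠ 0) :
    ∃ v w : ι → F, v ≠ 0 ∧ w ≠ 0 ∧ E = Matrix.vecMulVec v w := by
  have h1 : Module.finrank F (Module.End.eigenspace (Matrix.toLin' A) l) ≤ 1 := by
    refine (LinearMap.finrank_eigenspace_le _ _).trans ?_
    rwa [Matrix.charpoly_toLin']
  obtain ⟨v, hv⟩ := finrank_le_one_iff.1 h1
  have hcol : ∀ j, ∃ c : F, c • (v : ι → F) = E.col j := by
    intro j
    have hmem : E.col j ∈ Module.End.eigenspace (Matrix.toLin' A) l := by
      rw [Module.End.mem_eigenspace_iff, Matrix.toLin'_apply]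
      ext i
      have := congrFun (congrFun hAE i) j
      simpa [Matrix.mul_apply, Matrix.mulVec, dotProduct] using this
    obtain ⟨c, hc⟩ := hv ⟨_, hmem⟩
    exact ⟨c, congrArg Subtype.val hc⟩
  choose w hw using hcol
  have hEq : E = Matrix.vecMulVec (v : ι → F) w := by
    ext i j
    have := congrFun (hw j) i
    simp only [Pi.smul_apply, smul_eq_mul, Matrix.col_apply] at this
    rw [← this, Matrix.vecMulVec_apply, mul_comm]
  refine ⟨v, w, ?_, ?_, hEq⟩
  · intro h0; apply hE; rw [hEq, h0]; ext; simp [Matrix.vecMulVec_apply]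
  · intro h0; apply hE; rw [hEq, h0]; ext; simp [Matrix.vecMulVec_apply]

lemma trace_vecMulVec' (A : Matrix ι ι F) (v w : ι → F) :
    (A * Matrix.vecMulVec v w).trace = w ⬝ᵥ A.mulVec v := by
  rw [Matrix.mul_vecMulVec, Matrix.trace_vecMulVec, dotProduct_comm]

lemma trace_mul_aeval (ρ : G →* Matrix.GeneralLinearGroup ι F) (g g₀ : G) (p : F[X]) :
    ((ρ g : Matrix ι ι F) * aeval (ρ g₀ : Matrix ι ι F) p).trace =
      ∑ k ∈ Finset.range (p.natDegree + 1),
        p.coeff k * (ρ (g * g₀ ^ k) : Matrix ι ι F).trace := by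
  rw [aeval_eq_sum_range, Finset.mul_sum, Matrix.trace_sum]
  refine Finset.sum_congr rfl fun k _ => ?_
  rw [Matrix.mul_smul, Matrix.trace_smul, smul_eq_mul, map_mul, map_pow, Units.val_mul,
    Units.val_pow_eq_pow_val]

end

end CompConj

/-- **Lemma (each irreducible component is isomorphic to its Galois conjugates).**
If `ρ : G → GLₙ(K̄)` decomposes (up to conjugation) as a direct sum of irreducible
representations `ρ₁ ⊕ ⋯ ⊕ ρᵣ`, all traces of `ρ` lie in `K`, and some `ρ(g₀)` has
characteristic polynomial with `n` distinct roots all lying in `K`, then for every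
`σ ∈ Gal(K̄/K)` and every `i`, the entrywise Galois conjugate `σ ∘ ρᵢ` is equivalent
to `ρᵢ`. -/
theorem component_conjugate_equivalent
    {G : Type*} [Group G] {K : Type*} [Field K] [CharZero K] {n r : ℕ}
    (ρ : G →* Matrix.GeneralLinearGroup (Fin n) (AlgebraicClosure K))
    (m : Fin r → ℕ)
    (ρi : (i : Fin r) → G →* Matrix.GeneralLinearGroup (Fin (m i)) (AlgebraicClosure K))
    (hirr : ∀ i, MatRep.IsIrreducible (ρi i))
    (e : (Σ i : Fin r, Fin (m i)) ≃ Fin n)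
    (M : Matrix.GeneralLinearGroup (Fin n) (AlgebraicClosure K))
    (hdecomp : ∀ g : G,
      (ρ g : Matrix (Fin n) (Fin n) (AlgebraicClosure K)) =
        (M : Matrix (Fin n) (Fin n) (AlgebraicClosure K)) *
          (Matrix.reindex e e
            (Matrix.blockDiagonal' fun i =>
              ((ρi i g : Matrix (Fin (m i)) (Fin (m i)) (AlgebraicClosure K))))) *
          ((M⁻¹ : Matrix.GeneralLinearGroup (Fin n) (AlgebraicClosure K)) :
            Matrix (Fin n) (Fin n) (AlgebraicClosure K)))
    (htr : ∀ g : G,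
      (ρ g : Matrix (Fin n) (Fin n) (AlgebraicClosure K)).trace ∈
        (algebraMap K (AlgebraicClosure K)).fieldRange)
    (g₀ : G)
    (hg₀ : ∃ roots : Fin n → AlgebraicClosure K, Function.Injective roots ∧
      (∀ i, roots i ∈ (algebraMap K (AlgebraicClosure K)).fieldRange) ∧
      (ρ g₀ : Matrix (Fin n) (Fin n) (AlgebraicClosure K)).charpoly =
        ∏ i, (X - C (roots i))) :
    ∀ (σ : AlgebraicClosure K ≃ₐ[K] AlgebraicClosure K) (i : Fin r),
      ∃ N : Matrix.GeneralLinearGroup (Fin (m i)) (AlgebraicClosure K),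
        ∀ g : G,
          (ρi i g : Matrix (Fin (m i)) (Fin (m i)) (AlgebraicClosure K)).map σ =
            (N : Matrix (Fin (m i)) (Fin (m i)) (AlgebraicClosure K)) *
              (ρi i g : Matrix (Fin (m i)) (Fin (m i)) (AlgebraicClosure K)) *
              ((N⁻¹ : Matrix.GeneralLinearGroup (Fin (m i)) (AlgebraicClosure K)) :
                Matrix (Fin (m i)) (Fin (m i)) (AlgebraicClosure K)) := by
  intro σ i
  obtain ⟨roots, hinj, hK, hchar⟩ := hg₀
  have htrρ : ∀ g, (ρ g : Matrix (Fin n) (Fin n) (AlgebraicClosure K)).trace =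
      ∑ j, (ρi j g : Matrix (Fin (m j)) (Fin (m j)) (AlgebraicClosure K)).trace := by
    intro g
    rw [hdecomp g, Matrix.trace_units_conj, ← Matrix.trace_blockDiagonal']
    simp only [Matrix.trace, Matrix.reindex_apply, Matrix.diag_apply, Matrix.submatrix_apply]
    exact Equiv.sum_comp e.symm (fun x => Matrix.blockDiagonal' (fun i =>
              ((ρi i g : Matrix (Fin (m i)) (Fin (m i)) (AlgebraicClosure K)))) x x)
  have hprod : ∏ j, (ρi j g₀ : Matrix (Fin (m j)) (Fin (m j)) (AlgebraicClosure K)).charpoly =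
      ∏ k, (X - C (roots k)) := by
    rw [← hchar, hdecomp g₀, Matrix.coe_units_inv, Matrix.charpoly_units_conj,
      Matrix.charpoly_reindex,
      CompConj.charpoly_blockDiag m (fun i => (hirr i).1)]
  set A := (ρi i g₀ : Matrix (Fin (m i)) (Fin (m i)) (AlgebraicClosure K)) with hA
  have := (hirr i).1
  obtain ⟨l, hl⟩ : ∃ l, A.charpoly.IsRoot l := by
    apply IsAlgClosed.exists_root
    rw [Matrix.charpoly_degree_eq_dim]
    have := Fintype.card_pos (α := Fin (m i))
    exact_mod_cast this.ne'
  have hdvdi : A.charpoly ∣ ∏ k, (X - C (roots k)) := by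
    rw [← hprod]; exact Finset.dvd_prod_of_mem _ (Finset.mem_univ i)
  obtain ⟨k0, hk0⟩ : ∃ k, roots k = l := by
    have h := hl.dvd hdvdi
    rw [IsRoot.def, eval_prod, Finset.prod_eq_zero_iff] at h
    obtain ⟨k, _, hk⟩ := h
    refine ⟨k, ?_⟩
    simp only [eval_sub, eval_X, eval_C] at hk
    exact (sub_eq_zero.1 hk).symm
  set p : (AlgebraicClosure K)[X] := ∏ k ∈ Finset.univ.erase k0, (X - C (roots k)) with hp
  have htot : (X - C l) * p = ∏ k, (X - C (roots k)) := by
    rw [← hk0]; exact Finset.mul_prod_erase _ (fun k => X - C (roots k)) (Finset.mem_univ k0)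
  have hpl : p.eval l ≠ 0 := by
    rw [hp, eval_prod, Finset.prod_ne_zero_iff]
    intro k hk
    simp only [eval_sub, eval_X, eval_C, ← hk0]
    rw [sub_ne_zero]
    intro h
    exact (Finset.ne_of_mem_erase hk) (hinj h).symm
  have hlX : (X - C l) ∣ A.charpoly := dvd_iff_isRoot.2 hl
  have hXne : (X - C l) ≠ 0 := X_sub_C_ne_zero l
  have hmult : A.charpoly.rootMultiplicity l ≤ 1 := by
    by_contra! hcon
    have h2 : (X - C l) ^ 2 ∣ A.charpoly :=
      (le_rootMultiplicity_iff (Matrix.charpoly_monic A).ne_zero).1 hcon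
    have h3 := h2.trans hdvdi
    rw [← htot, pow_two] at h3
    exact hpl (dvd_iff_isRoot.1 ((mul_dvd_mul_iff_left hXne).1 h3))
  have hother : ∀ j, j ≠ i →
      aeval (ρi j g₀ : Matrix (Fin (m j)) (Fin (m j)) (AlgebraicClosure K)) p = 0 := by
    intro j hj
    have h1 : A.charpoly *
        (ρi j g₀ : Matrix (Fin (m j)) (Fin (m j)) (AlgebraicClosure K)).charpoly ∣
        ∏ k, (X - C (roots k)) := by
      rw [← hprod, ← Finset.mul_prod_erase _ _ (Finset.mem_univ i)]
      exact mul_dvd_mul_left _ (Finset.dvd_prod_of_mem (fun j =>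
        (ρi j g₀ : Matrix (Fin (m j)) (Fin (m j)) (AlgebraicClosure K)).charpoly)
        (Finset.mem_erase.2 ⟨hj, Finset.mem_univ j⟩))
    rw [← htot] at h1
    obtain ⟨q, hq⟩ := (mul_dvd_mul_iff_left hXne).1 ((mul_dvd_mul_right hlX _).trans h1)
    rw [hq, map_mul, Matrix.aeval_self_charpoly, zero_mul]
  have hAE : A * aeval A p = l • aeval A p := by
    obtain ⟨q, hq⟩ := hdvdi
    have h := congrArg (aeval A) (htot.trans hq)
    rw [map_mul, map_mul, Matrix.aeval_self_charpoly, zero_mul, map_sub, aeval_X, aeval_C,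
      sub_mul, sub_eq_zero, ← Algebra.smul_def] at h
    exact h
  have hE : aeval A p ≠ 0 := by
    intro h0
    have hev : Module.End.HasEigenvalue (Matrix.toLin' A) l := by
      rw [Module.End.hasEigenvalue_iff_isRoot_charpoly, Matrix.charpoly_toLin']
      exact hl
    obtain ⟨x, hx⟩ := hev.exists_hasEigenvector
    have h1 := Module.End.aeval_apply_of_hasEigenvector (p := p) hx
    have h2 : aeval (Matrix.toLin' A) p = 0 := by
      have := Polynomial.aeval_algHom_apply
        (Matrix.toLinAlgEquiv' (R := AlgebraicClosure K) (n := Fin (m i))).toAlgHom A p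
      rw [h0, map_zero] at this
      exact this
    rw [h2, LinearMap.zero_apply] at h1
    exact (smul_ne_zero hpl hx.2) h1.symm
  obtain ⟨v, w, hv, hw, hvw⟩ := CompConj.rank_one A _ l hmult hAE hE
  have hcoeff : ∀ k, p.coeff k ∈ (algebraMap K (AlgebraicClosure K)).fieldRange := by
    intro k
    choose c hc using hK
    have : p = (∏ k ∈ Finset.univ.erase k0, (X - C (c k))).map
        (algebraMap K (AlgebraicClosure K)) := by
      rw [Polynomial.map_prod, hp]
      refine Finset.prod_congr rfl fun k _ => ?_
      rw [Polynomial.map_sub, map_X, map_C, hc]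
    rw [this, coeff_map]
    exact ⟨_, rfl⟩
  have hmem : ∀ g, w ⬝ᵥ
      (ρi i g : Matrix (Fin (m i)) (Fin (m i)) (AlgebraicClosure K)).mulVec v ∈
        (algebraMap K (AlgebraicClosure K)).fieldRange := by
    intro g
    have h1 : ∑ j, ((ρi j g : Matrix (Fin (m j)) (Fin (m j)) (AlgebraicClosure K)) *
        aeval (ρi j g₀ : Matrix (Fin (m j)) (Fin (m j)) (AlgebraicClosure K)) p).trace =
        w ⬝ᵥ (ρi i g : Matrix (Fin (m i)) (Fin (m i)) (AlgebraicClosure K)).mulVec v := by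
      rw [Finset.sum_eq_single i]
      · rw [← hA, hvw, CompConj.trace_vecMulVec']
      · intro j _ hj
        rw [hother j hj, mul_zero, Matrix.trace_zero]
      · intro h; exact absurd (Finset.mem_univ i) h
    rw [← h1]
    simp only [CompConj.trace_mul_aeval]
    rw [Finset.sum_comm]
    simp only [← Finset.mul_sum, ← htrρ]
    exact Subfield.sum_mem _ fun k _ => Subfield.mul_mem _ (hcoeff k) (htr _)
  obtain ⟨N, hN⟩ := CompConj.equiv_of_coeff (ρi i)
    ((Matrix.GeneralLinearGroup.map (σ.toRingEquiv : AlgebraicClosure K →+* AlgebraicClosure K)).comp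
      (ρi i)) (hirr i)
    (CompConj.irr_map σ.toRingEquiv (ρi i) (hirr i)) v w (σ ∘ v) (σ ∘ w) hv hw
    (fun h => hv (by ext x; simpa using congrFun h x))
    (fun h => hw (by ext x; simpa using congrFun h x)) (by
      intro g
      obtain ⟨c, hc⟩ := hmem g
      have hs : σ (w ⬝ᵥ
        (ρi i g : Matrix (Fin (m i)) (Fin (m i)) (AlgebraicClosure K)).mulVec v) = w ⬝ᵥ
        (ρi i g : Matrix (Fin (m i)) (Fin (m i)) (AlgebraicClosure K)).mulVec v := by
        rw [← hc]; exact σ.commutes c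
      rw [← hs]
      simp [Matrix.mulVec, dotProduct])
  refine ⟨N, fun g => ?_⟩
  rw [← hN g]
  ext x y
  simp
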